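/- Positive special decomposition: a braid β ∈ B_∞ admits a decomposition β = β₁ · sh(β₂) ⋯ sh^{n−1}(βₙ) in which every βᵢ is a special positive braid if and only if β is a positive simple braid, i.e., there exists an integer n such that β is a left divisor of Garside's fundamental braid Δ_n in the positive braid monoid B_∞^+ (there exists a positive braid γ with β · γ = Δ_n, where Δ_n := (σ₁ σ₂ ⋯ σ_{n−1})(σ₁ ⋯ σ_{n−2}) ⋯ (σ₁)). -/

import Mathlib

/-- The braid relations on generators indexed by `ℕ` (generator `i` stands for
the Artin generator `σ_{i+1}` of the paper). -/
def braidRels : Set (FreeGroup ℕ) :=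
  {r | (∃ i j : ℕ, i + 2 ≤ j ∧
          r = .of i * .of j * (.of i)⁻¹ * (.of j)⁻¹) ∨
       (∃ i : ℕ,
          r = .of i * .of (i + 1) * .of i *
              (.of (i + 1) * .of i * .of (i + 1))⁻¹)}

/-- The braid group on infinitely many strands. -/
abbrev Binf : Type := PresentedGroup braidRels

/-- `σ i` is the Artin generator `σ_{i+1}` of the paper (0-indexed). -/
def σ (i : ℕ) : Binf := PresentedGroup.of i

lemma mk_rel_eq_one {r : FreeGroup ℕ} (h : r ∈ braidRels) :
    PresentedGroup.mk braidRels r = 1 :=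
  (QuotientGroup.eq_one_iff r).mpr (Subgroup.subset_normalClosure h)

lemma shift_lift_eq_one :
    ∀ r ∈ braidRels, FreeGroup.lift (fun n => σ (n + 1)) r = 1 := by
  intro r hr
  have key : ∀ s ∈ braidRels, FreeGroup.lift (fun n => σ (n + 1)) s
      = PresentedGroup.mk braidRels (FreeGroup.map (· + 1) s) := by
    intro s _
    have : (FreeGroup.lift (fun n => σ (n + 1)) : FreeGroup ℕ →* Binf)
        = (PresentedGroup.mk braidRels).comp (FreeGroup.map (· + 1)) := by
      apply FreeGroup.ext_hom
      intro x
      simp [σ, PresentedGroup.of]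
    rw [this]; rfl
  rw [key r hr]
  apply mk_rel_eq_one
  rcases hr with ⟨i, j, hij, rfl⟩ | ⟨i, rfl⟩
  · exact Or.inl ⟨i + 1, j + 1, by omega, by simp⟩
  · exact Or.inr ⟨i + 1, by simp⟩

/-- The shift endomorphism of the braid group, mapping `σ i` to `σ (i+1)`. -/
def sh : Binf →* Binf := PresentedGroup.toGroup shift_lift_eq_one

@[simp] lemma sh_σ (i : ℕ) : sh (σ i) = σ (i + 1) :=
  PresentedGroup.toGroup.of shift_lift_eq_one

/-- The shifted-conjugation (selfdistributive) operation on `Binf`: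
`β₁ ▷ β₂ = β₁ · sh β₂ · σ₁ · (sh β₁)⁻¹`. -/
def sc (β₁ β₂ : Binf) : Binf := β₁ * sh β₂ * σ 0 * (sh β₁)⁻¹

/-- The set of special braids: the smallest subset of `Binf` containing the
unit braid and closed under the shifted-conjugation operation `sc`. -/
def Special : Set Binf :=
  {x | ∀ P : Binf → Prop, P 1 → (∀ a b, P a → P b → P (sc a b)) → P x}

/-- The shifted product `∏^sh(β₁, …, βₙ) = β₁ · sh β₂ ⋯ sh^{n-1} βₙ`. -/
def shProd : List Binf → Binf
  | [] => 1
  | a :: t => a * sh (shProd t)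

/-- The monoid of positive braids: the submonoid of `Binf` generated by all
the generators `σ i`. -/
def BPos : Submonoid Binf := Submonoid.closure (Set.range σ)

/-- `ascProd m = σ 0 * σ 1 * ⋯ * σ (m-1)`, the paper's `σ₁ σ₂ ⋯ σ_m`. -/
def ascProd (m : ℕ) : Binf := ((List.range m).map σ).prod

/-- Garside's fundamental braid
`Δ_n = (σ₁ ⋯ σ_{n-1}) (σ₁ ⋯ σ_{n-2}) ⋯ (σ₁)`. -/
def Δ : ℕ → Binf
  | 0 => 1
  | n + 1 => ascProd n * Δ n

/-!
The descending products `d k = σ (k - 1) ⋯ σ 0` are exactly the positive special braids. Let braids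
act from the right on colourings of the strands by the rack `a ▷ b = b + 1` on `ℤ`. A special braid
takes the zero colouring to `(k, 0, 0, …)` for some `k`. A positive braid applied to zero passes
through nonnegative colourings only, so reading it backwards from `(k, 0, 0, …)` each letter must
move the nonzero colour one step to the right, which spells `d k`.

The shifted products of the `d k` are exactly the positive simple braids. They divide a large `Δ n`
because `d k * sh (Δ n)` divides `Δ (n + 1)` when `k ≤ n`. Conversely, multiplying such a product by
`σ i` on the right gives another one unless the product already ends in `σ i`. The second case would
produce a factor `σ i * σ i` of `Δ n`, which is impossible since `Δ n` is a reduced word: its length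
is the number of inversions of its permutation.
-/

namespace Binf

lemma σ_commute {i j : ℕ} (h : i + 2 ≤ j) : Commute (σ i) (σ j) := by
  have hrel := mk_rel_eq_one (Or.inl ⟨i, j, h, rfl⟩)
  simp only [map_mul, map_inv] at hrel
  exact mul_inv_eq_iff_eq_mul.mp (mul_inv_eq_one.mp hrel)

lemma σ_braid (i : ℕ) : σ i * σ (i + 1) * σ i = σ (i + 1) * σ i * σ (i + 1) := by
  have hrel := PresentedGroup.mk_eq_mk_of_mul_inv_mem (rels := braidRels) (Or.inr ⟨i, rfl⟩)
  simp only [map_mul] at hrel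
  exact hrel

/-- The homomorphism out of the braid group determined by elements `f i` satisfying the braid
relations. -/
def lift {G : Type*} [Group G] (f : ℕ → G) (hcomm : ∀ i j, i + 2 ≤ j → Commute (f i) (f j))
    (hbraid : ∀ i, f i * f (i + 1) * f i = f (i + 1) * f i * f (i + 1)) : Binf →* G :=
  PresentedGroup.toGroup (f := f) <| by
    rintro r (⟨i, j, h, rfl⟩ | ⟨i, rfl⟩)
    · simp only [map_mul, map_inv, FreeGroup.lift_apply_of]
      exact mul_inv_eq_one.mpr (mul_inv_eq_of_eq_mul (hcomm i j h))
    · simp only [map_mul, map_inv, FreeGroup.lift_apply_of]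
      exact mul_inv_eq_one.mpr (hbraid i)

@[simp]
lemma lift_σ {G : Type*} [Group G] (f : ℕ → G)
    (hcomm : ∀ i j, i + 2 ≤ j → Commute (f i) (f j))
    (hbraid : ∀ i, f i * f (i + 1) * f i = f (i + 1) * f i * f (i + 1)) (i : ℕ) :
    lift f hcomm hbraid (σ i) = f i :=
  PresentedGroup.toGroup.of _

lemma hom_ext {G : Type*} [Group G] {φ ψ : Binf →* G} (h : ∀ i, φ (σ i) = ψ (σ i)) : φ = ψ :=
  PresentedGroup.ext h

lemma σ_zero_commute_sh_sh (x : Binf) : Commute (σ 0) (sh (sh x)) := by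
  have h : (MulAut.conj (σ 0)).toMonoidHom.comp (sh.comp sh) = sh.comp sh := hom_ext fun i => by
    simp [(σ_commute (show 0 + 2 ≤ i + 2 by lia)).eq]
  exact mul_inv_eq_iff_eq_mul.mp (DFunLike.congr_fun h x)

lemma σ_mem_BPos (i : ℕ) : σ i ∈ BPos := Submonoid.subset_closure ⟨i, rfl⟩

lemma sh_mem_BPos {x : Binf} (h : x ∈ BPos) : sh x ∈ BPos := by
  have hle : BPos ≤ BPos.comap sh := Submonoid.closure_le.mpr <| by
    rintro _ ⟨i, rfl⟩
    simpa using σ_mem_BPos (i + 1)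
  exact hle h

/-! ### Ascending and descending products -/

lemma ascProd_zero : ascProd 0 = 1 := rfl

lemma ascProd_succ (n : ℕ) : ascProd (n + 1) = ascProd n * σ n := by
  simp [ascProd, List.range_succ]

lemma ascProd_succ' (n : ℕ) : ascProd (n + 1) = σ 0 * sh (ascProd n) := by
  simp [ascProd, List.range_succ_eq_map, map_list_prod, Function.comp_def]

lemma ascProd_mem_BPos (n : ℕ) : ascProd n ∈ BPos :=
  Submonoid.list_prod_mem _ <| by simpa using fun i _ => σ_mem_BPos i

lemma Δ_mem_BPos (n : ℕ) : Δ n ∈ BPos := by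
  induction n with
  | zero => exact one_mem _
  | succ n ih => exact mul_mem (ascProd_mem_BPos n) ih

lemma ascProd_commute_σ {n j : ℕ} (h : n < j) : Commute (ascProd n) (σ j) := by
  induction n with
  | zero => exact Commute.one_left _
  | succ n ih =>
    rw [ascProd_succ]
    exact (ih (by lia)).mul_left (σ_commute (by lia))

lemma ascProd_semiconjBy_σ {i n : ℕ} (h : i + 2 ≤ n) :
    SemiconjBy (ascProd n) (σ i) (σ (i + 1)) := by
  induction n, h using Nat.le_induction with
  | base =>
    have hbraid : SemiconjBy (σ i * σ (i + 1)) (σ i) (σ (i + 1)) := by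
      simpa only [SemiconjBy, mul_assoc] using σ_braid i
    rw [ascProd_succ, ascProd_succ, mul_assoc]
    exact SemiconjBy.mul_left (ascProd_commute_σ (Nat.lt_succ_self i)) hbraid
  | succ n hn ih =>
    rw [ascProd_succ]
    exact ih.mul_left (σ_commute hn).symm

lemma ascProd_semiconjBy_ascProd {m n : ℕ} (h : m < n) :
    SemiconjBy (ascProd n) (ascProd m) (sh (ascProd m)) := by
  induction m with
  | zero => simp [ascProd_zero]
  | succ m ih =>
    rw [ascProd_succ, map_mul, sh_σ]
    exact (ih (by lia)).mul_right (ascProd_semiconjBy_σ h)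

lemma ascProd_semiconjBy_Δ {m n : ℕ} (h : m ≤ n) :
    SemiconjBy (ascProd n) (Δ m) (sh (Δ m)) := by
  induction m with
  | zero => simp [Δ]
  | succ m ih =>
    rw [Δ, map_mul]
    exact (ascProd_semiconjBy_ascProd h).mul_right (ih (by lia))

lemma Δ_succ' (n : ℕ) : Δ (n + 1) = sh (Δ n) * ascProd n :=
  ascProd_semiconjBy_Δ le_rfl

/-- The anti-automorphism of the braid group reversing words, as a homomorphism to the opposite
group. It exchanges ascending and descending products. -/
def rev : Binf →* Binfᵐᵒᵖ :=
  lift (fun i => .op (σ i)) (fun _ _ h => (σ_commute h).op) fun i => by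
    simpa only [← MulOpposite.op_mul, mul_assoc] using congrArg MulOpposite.op (σ_braid i)

lemma rev_sh (x : Binf) : rev (sh x) = .op (sh (rev x).unop) := by
  have h : rev.comp sh = sh.op.comp rev := hom_ext fun i => by simp [rev]
  exact DFunLike.congr_fun h x

/-- The descending product `descProd k = σ (k - 1) * ⋯ * σ 0`, the paper's `σ_k ⋯ σ₂ σ₁`. -/
def descProd : ℕ → Binf
  | 0 => 1
  | k + 1 => σ k * descProd k

lemma rev_ascProd (n : ℕ) : rev (ascProd n) = .op (descProd n) := by
  induction n with
  | zero => simp [ascProd_zero, descProd]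
  | succ n ih => rw [ascProd_succ, map_mul, ih, descProd, MulOpposite.op_mul]; simp [rev]

lemma descProd_succ' (n : ℕ) : descProd (n + 1) = sh (descProd n) * σ 0 := by
  apply MulOpposite.op_injective
  rw [← rev_ascProd, ascProd_succ', map_mul, rev_sh, rev_ascProd]
  simp [rev]

lemma descProd_mem_BPos (n : ℕ) : descProd n ∈ BPos := by
  induction n with
  | zero => exact one_mem _
  | succ n ih => exact mul_mem (σ_mem_BPos n) ih

lemma descProd_mul_descProd {m n : ℕ} (h : m < n) :
    descProd m * descProd n = descProd n * sh (descProd m) := by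
  apply MulOpposite.op_injective
  simpa [rev_sh, rev_ascProd] using congrArg rev (ascProd_semiconjBy_ascProd h).eq

lemma descProd_mul_sh_descProd_mul_σ_zero {k m : ℕ} (h : k ≤ m) :
    descProd k * sh (descProd m) * σ 0 = descProd (m + 1) * sh (descProd k) := by
  rw [mul_assoc, ← descProd_succ', descProd_mul_descProd (Nat.lt_succ_of_le h)]

lemma descProd_mul_sh_Δ_mul_ascProd (k m : ℕ) :
    descProd k * sh (Δ (m + k)) * ascProd m = Δ (m + k + 1) := by
  induction k with
  | zero => rw [descProd, one_mul, add_zero, Δ_succ']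
  | succ k ih =>
    have hσ := (σ_zero_commute_sh_sh (Δ (m + k))).eq
    have hasc := (ascProd_semiconjBy_ascProd (show m < m + k + 1 by lia)).eq
    calc descProd (k + 1) * sh (Δ (m + k + 1)) * ascProd m
        = sh (descProd k) * (σ 0 * sh (sh (Δ (m + k)))) * sh (ascProd (m + k)) * ascProd m := by
          simp only [descProd_succ', Δ_succ', map_mul, mul_assoc]
      _ = sh (descProd k) * sh (sh (Δ (m + k))) * (ascProd (m + k + 1) * ascProd m) := by
          simp only [hσ, ascProd_succ', mul_assoc]
      _ = sh (descProd k * sh (Δ (m + k)) * ascProd m) * ascProd (m + k + 1) := by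
          simp only [hasc, map_mul, mul_assoc]
      _ = Δ (m + (k + 1) + 1) := by rw [ih, ← Δ_succ', add_assoc m k 1]

/-! ### Positive special braids -/

/-- The permutation of colourings of the strands undoing a crossing `σ i`, where crossings act from
the right through the rack `a ▷ b = b + 1`, replacing the colours `a, b` at `i, i + 1` by
`b + 1, a`. -/
def uncross (i : ℕ) : Equiv.Perm (ℕ → ℤ) :=
  ((Equiv.swap i (i + 1)).arrowCongr (Equiv.refl ℤ)).trans (Equiv.subRight (Pi.single (i + 1) 1))

lemma uncross_apply (i : ℕ) (s : ℕ → ℤ) (x : ℕ) :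
    uncross i s x = s (Equiv.swap i (i + 1) x) - (Pi.single (i + 1) 1 : ℕ → ℤ) x := rfl

lemma uncross_single (i : ℕ) (k : ℤ) :
    uncross i (Pi.single i k) = Pi.single (i + 1) (k - 1) := by
  ext x
  simp only [uncross_apply, Equiv.swap_apply_def, Pi.single_apply]
  grind

lemma nonneg_of_uncross_nonneg {i : ℕ} {s : ℕ → ℤ} (h : 0 ≤ uncross i s) : 0 ≤ s := by
  intro x
  have hx := h (Equiv.swap i (i + 1) x)
  have hsingle : (0 : ℕ → ℤ) ≤ Pi.single (i + 1) 1 := Pi.single_nonneg.mpr zero_le_one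
  rw [uncross_apply, Equiv.swap_apply_self] at hx
  exact (hsingle (Equiv.swap i (i + 1) x)).trans (sub_nonneg.mp hx)

/-- The action on colourings of the strands by the rack `a ▷ b = b + 1` on `ℤ`. Since the natural
action is on the right, `uncolor β s` is the colouring which `β` transforms into `s`. -/
def uncolor : Binf →* Equiv.Perm (ℕ → ℤ) :=
  lift uncross
    (fun i j h => by
      ext s x
      simp only [Equiv.Perm.mul_apply, uncross_apply, Equiv.swap_apply_def, Pi.single_apply]
      grind)
    fun i => by
      ext s x
      simp only [Equiv.Perm.mul_apply, uncross_apply, Equiv.swap_apply_def, Pi.single_apply]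
      grind

@[simp]
lemma uncolor_σ (i : ℕ) : uncolor (σ i) = uncross i := lift_σ ..

/-- The colouring obtained from `s` by adding a strand coloured `a` in front. -/
def cons (a : ℤ) (s : ℕ → ℤ) : ℕ → ℤ
  | 0 => a
  | x + 1 => s x

lemma cons_zero_right (a : ℤ) : cons a 0 = Pi.single 0 a := by
  ext (_ | x) <;> simp [cons]

lemma uncross_succ_cons (i : ℕ) (a : ℤ) (s : ℕ → ℤ) :
    uncross (i + 1) (cons a s) = cons a (uncross i s) := by
  ext (_ | x)
  · simp [uncross_apply, cons, Equiv.swap_apply_of_ne_of_ne]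
  · simp only [cons, uncross_apply, Equiv.swap_apply_def, Pi.single_apply, Nat.add_right_cancel_iff]
    split_ifs <;> rfl

lemma uncross_zero_cons_cons (a b : ℤ) (s : ℕ → ℤ) :
    uncross 0 (cons (b + 1) (cons a s)) = cons a (cons b s) := by
  ext (_ | _ | x) <;> simp [uncross_apply, cons, Equiv.swap_apply_of_ne_of_ne]

lemma uncolor_sh_cons (β : Binf) (a : ℤ) (s : ℕ → ℤ) :
    uncolor (sh β) (cons a s) = cons a (uncolor β s) := by
  have hβ : β ∈ Subgroup.closure (Set.range σ) :=
    PresentedGroup.closure_range_of braidRels ▸ Subgroup.mem_top β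
  induction hβ using Subgroup.closure_induction generalizing s with
  | mem _ h =>
    obtain ⟨i, rfl⟩ := h
    simpa using uncross_succ_cons i a s
  | one => simp
  | mul x y _ _ hx hy => simp [hx, hy]
  | inv x _ hx =>
    rw [map_inv, map_inv, Equiv.Perm.inv_eq_iff_eq, hx, ← Equiv.Perm.mul_apply, ← map_mul,
      mul_inv_cancel, map_one, Equiv.Perm.one_apply]

lemma exists_uncolor_cons_zero_eq_zero {β : Binf} (h : β ∈ Special) :
    ∃ k, uncolor β (cons k 0) = 0 := by
  have hzero : cons 0 0 = 0 := by rw [cons_zero_right, Pi.single_zero]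
  refine h (fun β => ∃ k, uncolor β (cons k 0) = 0) ⟨0, by simpa using hzero⟩ ?_
  rintro a b ⟨p, hp⟩ ⟨q, hq⟩
  have ha : (uncolor (sh a))⁻¹ (cons (q + 1) 0) = cons (q + 1) (cons p 0) := by
    rw [Equiv.Perm.inv_eq_iff_eq, uncolor_sh_cons, hp]
  refine ⟨q + 1, ?_⟩
  calc uncolor (sc a b) (cons (q + 1) 0)
      = uncolor a (uncolor (sh b) (uncolor (σ 0) (cons (q + 1) (cons p 0)))) := by
        simp only [sc, map_mul, map_inv, Equiv.Perm.mul_apply, ha]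
    _ = uncolor a (uncolor (sh b) (cons p (cons q 0))) := by
        rw [uncolor_σ, uncross_zero_cons_cons]
    _ = 0 := by rw [uncolor_sh_cons, hq, hp]

lemma nonneg_of_uncolor_nonneg {β : Binf} (hβ : β ∈ BPos) {s : ℕ → ℤ} (h : 0 ≤ uncolor β s) :
    0 ≤ s := by
  induction hβ using Submonoid.closure_induction generalizing s with
  | mem _ hσ =>
    obtain ⟨i, rfl⟩ := hσ
    exact nonneg_of_uncross_nonneg (by simpa using h)
  | one => simpa using h
  | mul x y _ _ hx hy => exact hy (hx (by simpa using h))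

lemma exists_mul_descProd_eq_descProd {β : Binf} (hβ : β ∈ BPos) {j : ℕ} {k : ℤ}
    (h : uncolor β (Pi.single j k) = 0) : ∃ m, β * descProd j = descProd m := by
  induction hβ using Submonoid.closure_induction_right generalizing j k with
  | one => exact ⟨j, one_mul _⟩
  | mul_right β hβ _ hσ ih =>
    obtain ⟨i, rfl⟩ := hσ
    rw [map_mul, Equiv.Perm.mul_apply, uncolor_σ] at h
    obtain rfl : i = j := by
      by_contra hij
      have hneg := nonneg_of_uncolor_nonneg hβ h.ge (i + 1)
      simp [uncross_apply, hij] at hneg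
    rw [uncross_single] at h
    obtain ⟨m, hm⟩ := ih h
    exact ⟨m, by rw [mul_assoc, ← descProd, hm]⟩

lemma descProd_mem_Special (k : ℕ) : descProd k ∈ Special := by
  intro P h_one h_sc
  induction k with
  | zero => exact h_one
  | succ k ih => simpa [sc, descProd_succ'] using h_sc 1 (descProd k) h_one ih

theorem Special_inter_BPos : Special ∩ BPos = Set.range descProd := by
  ext β
  constructor
  · rintro ⟨hS, hP⟩
    obtain ⟨k, hk⟩ := exists_uncolor_cons_zero_eq_zero hS
    obtain ⟨m, hm⟩ := exists_mul_descProd_eq_descProd hP (cons_zero_right k ▸ hk)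
    exact ⟨m, by rw [← hm, descProd, mul_one]⟩
  · rintro ⟨k, rfl⟩
    exact ⟨descProd_mem_Special k, descProd_mem_BPos k⟩

/-! ### Simple braids -/

/-- The simple braid `∏^sh(descProd k₁, …, descProd kₙ)` with Lehmer code `[k₁, …, kₙ]`. -/
def ofCode (l : List ℕ) : Binf := shProd (l.map descProd)

lemma exists_list_special_iff_exists_ofCode (β : Binf) :
    (∃ l : List Binf, (∀ x ∈ l, x ∈ Special ∧ x ∈ BPos) ∧ β = shProd l) ↔
      ∃ l, β = ofCode l := by
  have hl : {l : List Binf | ∀ x ∈ l, x ∈ Special ∩ BPos} = Set.range (List.map descProd) := by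
    rw [Special_inter_BPos, Set.range_list_map]
  change (∃ l ∈ {l : List Binf | ∀ x ∈ l, x ∈ Special ∩ BPos}, β = shProd l) ↔ _
  rw [hl, Set.exists_range_iff]
  rfl

lemma ofCode_cons (k : ℕ) (l : List ℕ) : ofCode (k :: l) = descProd k * sh (ofCode l) := rfl

lemma ofCode_eq_head_mul_tail (l : List ℕ) :
    ofCode l = descProd (l.headD 0) * sh (ofCode l.tail) := by
  cases l with
  | nil => simp [ofCode, shProd, descProd]
  | cons k l => rfl

lemma ofCode_mem_BPos (l : List ℕ) : ofCode l ∈ BPos := by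
  induction l with
  | nil => exact one_mem _
  | cons k l ih => exact mul_mem (descProd_mem_BPos k) (sh_mem_BPos ih)

lemma exists_ofCode_mul_eq_Δ (l : List ℕ) :
    ∃ N, ∀ n ≥ N, ∃ γ ∈ BPos, ofCode l * γ = Δ n := by
  induction l with
  | nil => exact ⟨0, fun n _ => ⟨Δ n, Δ_mem_BPos n, one_mul _⟩⟩
  | cons k l ih =>
    obtain ⟨N, hN⟩ := ih
    refine ⟨N + k + 1, fun n hn => ?_⟩
    obtain ⟨m, rfl⟩ : ∃ m, n = m + k + 1 := ⟨n - (k + 1), by lia⟩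
    obtain ⟨γ, hγ, hl⟩ := hN (m + k) (by lia)
    refine ⟨sh γ * ascProd m, mul_mem (sh_mem_BPos hγ) (ascProd_mem_BPos m), ?_⟩
    rw [ofCode_cons, ← descProd_mul_sh_Δ_mul_ascProd, ← hl, map_mul]
    simp only [mul_assoc]

lemma exists_ofCode_eq_σ (i : ℕ) : ∃ l, ofCode l = σ i := by
  induction i with
  | zero => exact ⟨[1], by simp [ofCode, shProd, descProd]⟩
  | succ i ih =>
    obtain ⟨l, hl⟩ := ih
    exact ⟨0 :: l, by rw [ofCode_cons, hl, descProd, one_mul, sh_σ]⟩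

lemma ofCode_mul_σ_zero (k m : ℕ) (l : List ℕ) :
    (∃ l', ofCode (k :: m :: l) * σ 0 = ofCode l') ∨
      ∃ y ∈ BPos, ofCode (k :: m :: l) = y * σ 0 := by
  have hσ := (σ_zero_commute_sh_sh (ofCode l)).eq
  rcases le_or_gt k m with hkm | hmk
  · refine .inl ⟨(m + 1) :: k :: l, ?_⟩
    calc ofCode (k :: m :: l) * σ 0
        = descProd k * sh (descProd m) * σ 0 * sh (sh (ofCode l)) := by
          simp only [ofCode_cons, map_mul, mul_assoc, hσ]
      _ = ofCode ((m + 1) :: k :: l) := by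
          simp only [descProd_mul_sh_descProd_mul_σ_zero hkm, ofCode_cons, map_mul, mul_assoc]
  · obtain ⟨j, rfl⟩ := Nat.exists_eq_add_of_lt hmk
    refine .inr ⟨ofCode (m :: (m + j) :: l), ofCode_mem_BPos _, ?_⟩
    calc ofCode ((m + j + 1) :: m :: l)
        = descProd m * sh (descProd (m + j)) * σ 0 * sh (sh (ofCode l)) := by
          rw [descProd_mul_sh_descProd_mul_σ_zero (Nat.le_add_right m j)]
          simp only [ofCode_cons, map_mul, mul_assoc]
      _ = ofCode (m :: (m + j) :: l) * σ 0 := by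
          simp only [ofCode_cons, map_mul, mul_assoc, hσ]

lemma ofCode_mul_σ (l : List ℕ) (i : ℕ) :
    (∃ l', ofCode l * σ i = ofCode l') ∨ ∃ y ∈ BPos, ofCode l = y * σ i := by
  induction l generalizing i with
  | nil =>
    obtain ⟨l', hl'⟩ := exists_ofCode_eq_σ i
    exact .inl ⟨l', by rw [hl']; exact one_mul _⟩
  | cons k l ih =>
    cases i with
    | zero =>
      have hl : ofCode (k :: l) = ofCode (k :: l.headD 0 :: l.tail) := by
        rw [ofCode_cons, ofCode_eq_head_mul_tail l, ofCode_cons k, ofCode_cons]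
      rw [hl]
      exact ofCode_mul_σ_zero k _ _
    | succ i =>
      rcases ih i with ⟨l', hl'⟩ | ⟨y, hy, hl⟩
      · exact .inl ⟨k :: l', by rw [ofCode_cons, ofCode_cons, ← hl', map_mul, sh_σ, mul_assoc]⟩
      · refine .inr ⟨descProd k * sh y, mul_mem (descProd_mem_BPos k) (sh_mem_BPos hy), ?_⟩
        rw [ofCode_cons, hl, map_mul, sh_σ, mul_assoc]

/-! ### The fundamental braid is reduced -/

/-- The length homomorphism, sending every generator to `1`. -/
def length : Binf →* Multiplicative ℤ :=
  lift (fun _ => .ofAdd 1) (fun _ _ _ => .refl _) fun _ => rfl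

@[simp]
lemma length_σ (i : ℕ) : length (σ i) = .ofAdd 1 := lift_σ ..

/-- The permutation induced by a braid, with `σ i` acting as the transposition `(i, i + 1)`. -/
def toPerm : Binf →* Equiv.Perm ℕ :=
  lift (fun i => Equiv.swap i (i + 1))
    (fun i j h => (Equiv.Perm.disjoint_swap_swap (by grind)).commute)
    fun i => by
      ext x
      simp only [Equiv.Perm.mul_apply, Equiv.swap_apply_def]
      grind

@[simp]
lemma toPerm_σ (i : ℕ) : toPerm (σ i) = Equiv.swap i (i + 1) := lift_σ ..

/-- The pairs `⟨j, i⟩` with `i < j < n`. -/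
def pairs (n : ℕ) : Finset (Σ _ : ℕ, ℕ) := (Finset.range n).sigma fun j => Finset.range j

lemma mem_pairs {n j i : ℕ} : ⟨j, i⟩ ∈ pairs n ↔ j < n ∧ i < j := by
  rw [pairs, Finset.mem_sigma, Finset.mem_range, Finset.mem_range]

/-- The inversions of `p` among the first `n` integers. -/
def inversions (n : ℕ) (p : Equiv.Perm ℕ) : Finset (Σ _ : ℕ, ℕ) :=
  {q ∈ pairs n | p q.1 < p q.2}

lemma mem_inversions {n j i : ℕ} {p : Equiv.Perm ℕ} :
    ⟨j, i⟩ ∈ inversions n p ↔ (j < n ∧ i < j) ∧ p j < p i := by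
  rw [inversions, Finset.mem_filter, mem_pairs]

lemma inversions_one (n : ℕ) : inversions n 1 = ∅ := by
  refine Finset.eq_empty_of_forall_notMem fun ⟨j, i⟩ hq => ?_
  obtain ⟨⟨-, hij⟩, hji⟩ := mem_inversions.mp hq
  exact hij.asymm hji

lemma inversions_swap_mul_subset (n k : ℕ) (p : Equiv.Perm ℕ) :
    inversions n (Equiv.swap k (k + 1) * p) ⊆
      insert ⟨p⁻¹ (k + 1), p⁻¹ k⟩ (inversions n p) := by
  rintro ⟨j, i⟩ hq
  obtain ⟨⟨hj, hij⟩, hlt⟩ := mem_inversions.mp hq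
  by_cases hp : p j < p i
  · exact Finset.mem_insert_of_mem (mem_inversions.mpr ⟨⟨hj, hij⟩, hp⟩)
  · have hne : p i ≠ p j := p.injective.ne hij.ne
    obtain ⟨hpi, hpj⟩ : p i = k ∧ p j = k + 1 := by
      rw [Equiv.Perm.mul_apply, Equiv.Perm.mul_apply, Equiv.swap_apply_def,
        Equiv.swap_apply_def] at hlt
      grind
    simp [Equiv.eq_symm_apply, hpi, hpj]

lemma card_inversions_le_length {β : Binf} (hβ : β ∈ BPos) (n : ℕ) :
    ((inversions n (toPerm β)).card : ℤ) ≤ (length β).toAdd := by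
  induction hβ using Submonoid.closure_induction_left with
  | one => simp [inversions_one]
  | mul_left _ hσ β _ ih =>
    obtain ⟨i, rfl⟩ := hσ
    have hcard : (inversions n (toPerm (σ i * β))).card ≤ (inversions n (toPerm β)).card + 1 := by
      rw [map_mul, toPerm_σ]
      exact (Finset.card_le_card (inversions_swap_mul_subset n i _)).trans
        (Finset.card_insert_le _ _)
    rw [map_mul length, length_σ, toAdd_mul, toAdd_ofAdd]
    lia

lemma toPerm_ascProd_apply (n x : ℕ) :
    toPerm (ascProd n) x = if x < n then x + 1 else if x = n then 0 else x := by
  induction n generalizing x with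
  | zero => rw [ascProd_zero, map_one, Equiv.Perm.one_apply]; grind
  | succ n ih =>
    rw [ascProd_succ, map_mul, Equiv.Perm.mul_apply, ih, toPerm_σ, Equiv.swap_apply_def]
    grind

lemma toPerm_Δ_apply (n x : ℕ) : toPerm (Δ n) x = if x < n then n - 1 - x else x := by
  induction n with
  | zero => simp [Δ]
  | succ n ih =>
    rw [Δ, map_mul, Equiv.Perm.mul_apply, ih, toPerm_ascProd_apply]
    grind

lemma inversions_Δ (n : ℕ) : inversions n (toPerm (Δ n)) = pairs n := by
  refine Finset.filter_true_of_mem ?_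
  rintro ⟨j, i⟩ hq
  obtain ⟨hj, hij⟩ := mem_pairs.mp hq
  simp only [toPerm_Δ_apply]
  grind

lemma length_ascProd (n : ℕ) : (length (ascProd n)).toAdd = n := by
  induction n with
  | zero => simp [ascProd_zero]
  | succ n ih => rw [ascProd_succ, map_mul, length_σ, toAdd_mul, ih, toAdd_ofAdd, Nat.cast_succ]

lemma length_Δ (n : ℕ) : (length (Δ n)).toAdd = (pairs n).card := by
  induction n with
  | zero => simp [Δ, pairs]
  | succ n ih =>
    rw [Δ, map_mul, toAdd_mul, ih, length_ascProd]
    simp [pairs, Finset.sum_range_succ, add_comm]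

lemma mul_σ_mul_σ_mul_ne_Δ {β γ : Binf} (hβ : β ∈ BPos) (hγ : γ ∈ BPos) (i n : ℕ) :
    β * σ i * σ i * γ ≠ Δ n := by
  intro h
  have hperm : toPerm (β * γ) = toPerm (Δ n) := by
    simp only [← h, map_mul, toPerm_σ, mul_assoc, Equiv.swap_mul_self_mul]
  have hlength : (length (β * γ)).toAdd + 2 = (length (Δ n)).toAdd := by
    simp only [← h, map_mul, length_σ, toAdd_mul, toAdd_ofAdd]
    ring
  have hle := card_inversions_le_length (mul_mem hβ hγ) n
  rw [hperm, inversions_Δ, ← length_Δ] at hle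
  lia

theorem exists_eq_ofCode_of_mul_eq_Δ {β γ : Binf} (hβ : β ∈ BPos) (hγ : γ ∈ BPos) {n : ℕ}
    (h : β * γ = Δ n) : ∃ l, β = ofCode l := by
  induction hβ using Submonoid.closure_induction_right generalizing γ with
  | one => exact ⟨[], rfl⟩
  | mul_right β _ _ hσ ih =>
    obtain ⟨i, rfl⟩ := hσ
    obtain ⟨l, rfl⟩ := ih (mul_mem (σ_mem_BPos i) hγ) (by rw [← mul_assoc, h])
    rcases ofCode_mul_σ l i with hl | ⟨y, hy, hl⟩
    · exact hl
    · exact (mul_σ_mul_σ_mul_ne_Δ hy hγ i n (hl ▸ h)).elim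

end Binf

/-- a braid admits a special decomposition consisting of
positive braids iff it is a positive simple braid, i.e. a left divisor of
some `Δ_n` in the positive braid monoid. -/
theorem positive_special_decomposition (β : Binf) :
    (∃ l : List Binf, (∀ x ∈ l, x ∈ Special ∧ x ∈ BPos) ∧ β = shProd l) ↔
    (β ∈ BPos ∧ ∃ n : ℕ, ∃ γ ∈ BPos, β * γ = Δ n) := by
  rw [Binf.exists_list_special_iff_exists_ofCode]
  constructor
  · rintro ⟨l, rfl⟩
    obtain ⟨N, hN⟩ := Binf.exists_ofCode_mul_eq_Δ l
    exact ⟨Binf.ofCode_mem_BPos l, N, hN N le_rfl⟩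
  · rintro ⟨hβ, n, γ, hγ, h⟩
    exact Binf.exists_eq_ofCode_of_mul_eq_Δ hβ hγ h
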